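/- Positivity lemma (Section 5): if b ∈ H is such that ⟨b, ∂φ⟩_H ≥ 0 for every φ ∈ 𝒞_B with φ(x) ≥ 0 for all x ∈ X, then ⟨∂f, f•b⟩_H ≥ 0 for every f ∈ 𝒞_B. -/

import Mathlib

open RealInnerProductSpace ContinuousMap

set_option synthInstance.maxHeartbeats 1000000
set_option maxHeartbeats 1000000

theorem inner_apply_mul_self_of_leibniz {A H : Type*} [Mul A]
    [SeminormedAddCommGroup H] [InnerProductSpace ℝ H]
    {act : A → H →ₗ[ℝ] H} {par : A → H}
    (hLeibniz : ∀ f g, par (f * g) = act f (par g) + act g (par f))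
    {f : A} (hf : (act f).IsSymmetric) (b : H) :
    ⟪b, par (f * f)⟫ = 2 * ⟪par f, act f b⟫ := by
  calc ⟪b, par (f * f)⟫
      = ⟪b, act f (par f)⟫ + ⟪b, act f (par f)⟫ := by rw [hLeibniz, inner_add_right]
    _ = 2 * ⟪act f b, par f⟫ := by rw [← hf, two_mul]
    _ = 2 * ⟪par f, act f b⟫ := by rw [real_inner_comm]

theorem stmt_1_general {X A H : Type*} [Mul A]
    [SeminormedAddCommGroup H] [InnerProductSpace ℝ H]
    (ev : A →ₙ* (X → ℝ)) (act : A → H →ₗ[ℝ] H) (hact : ∀ f, (act f).IsSymmetric)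
    (par : A → H) (hLeibniz : ∀ f g, par (f * g) = act f (par g) + act g (par f))
    (B : Set X) (b : H)
    (hb : ∀ φ, (∀ x ∈ B, ev φ x = 0) → (∀ x, 0 ≤ ev φ x) → 0 ≤ ⟪b, par φ⟫)
    (f : A) (hf : ∀ x ∈ B, ev f x = 0) : 0 ≤ ⟪par f, act f b⟫ := by
  have ev_sq (x : X) : ev (f * f) x = ev f x * ev f x := by rw [map_mul, Pi.mul_apply]
  have sq_eq_zero : ∀ x ∈ B, ev (f * f) x = 0 := fun x hx ↦ by rw [ev_sq, hf x hx, mul_zero]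
  have zero_le_sq (x : X) : 0 ≤ ev (f * f) x := ev_sq x ▸ mul_self_nonneg _
  have inner_sq_nonneg : 0 ≤ 2 * ⟪par f, act f b⟫ :=
    inner_apply_mul_self_of_leibniz hLeibniz (hact f) b ▸ hb (f * f) sq_eq_zero zero_le_sq
  exact nonneg_of_mul_nonneg_right inner_sq_nonneg two_pos

/-- **Positivity lemma**: if `b ∈ H` is such that `⟨b, ∂φ⟩_H ≥ 0` for every `φ ∈ 𝒞_B` with
`φ ≥ 0` on `X`, then `⟨∂f, f•b⟩_H ≥ 0` for every `f ∈ 𝒞_B`. -/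
theorem stmt_1
    {X : Type*} [TopologicalSpace X]
    {H : Type*} [NormedAddCommGroup H] [InnerProductSpace ℝ H] [CompleteSpace H]
    (𝒞 : Subalgebra ℝ C(X, ℝ))
    (act : 𝒞 →ₗ[ℝ] H →ₗ[ℝ] H)
    (hact_one : ∀ v : H, act 1 v = v)
    (hact_symm : ∀ (f : 𝒞) (v w : H), ⟪act f v, w⟫ = ⟪v, act f w⟫)
    (hact_bound : ∀ (f : 𝒞) (M : ℝ), (∀ x : X, |(f : C(X, ℝ)) x| ≤ M) →
      ∀ v : H, ‖act f v‖ ≤ M * ‖v‖)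
    (par : 𝒞 →ₗ[ℝ] H)
    (hLeibniz : ∀ f g : 𝒞, par (f * g) = act f (par g) + act g (par f))
    (B : Set X) (hB : IsClosed B)
    (b : H)
    (hb : ∀ φ : 𝒞, (∀ x ∈ B, (φ : C(X, ℝ)) x = 0) → (∀ x : X, 0 ≤ (φ : C(X, ℝ)) x) →
      0 ≤ ⟪b, par φ⟫) :
    ∀ f : 𝒞, (∀ x ∈ B, (f : C(X, ℝ)) x = 0) → 0 ≤ ⟪par f, act f b⟫ :=
  stmt_1_general ((coeFnAlgHom ℝ).comp 𝒞.val : 𝒞 →ₙ* (X → ℝ)) act hact_symm par hLeibniz B b hb
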